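/- The function A is a classical solution of the nonlinear parabolic PDE ∂_t A(t,x) = −(1/2)( ∂_{xx} A(t,x) + m' (∂_x A(t,x))² ) for all (t,x) ∈ [a,b) × ℝ, and satisfies the boundary condition lim_{t→b−} A(t,x) = |x| for every x ∈ ℝ. -/

import Mathlib

/-!
The logarithm is a Cole–Hopf transform: writing `A = (1/m') log u` with
`u(τ,x) = E exp(m'|x + z√τ|)` and `τ = b - t`, the nonlinear equation for `A` becomes the heat
equation `∂_τ u = (1/2) ∂ₓₓ u`. Although the initial datum `exp(m'|x|)` has a kink, `u` is explicit:
splitting the expectation at the sign change of `x + z√τ` and completing the square gives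
`u(τ,x) = F(τ,x) + F(τ,-x)`, where `F(τ,x) = exp(m'²τ/2 + m'x) Φ(x/√τ + m'√τ)` and `Φ` is the
Gaussian distribution function (`half`, `integral_eq_halves`). Completing the square once more shows that
differentiating `Φ` inside `F` only produces the even function `φ(x/√τ)` (`tilt_mul_phi`), which
makes the derivatives of `F` (`hasDerivAt_half_space`, `hasDerivAt_half_time`), and hence
the heat equation, explicit. The boundary value follows from dominated convergence.
-/

open MeasureTheory ProbabilityTheory

/-- `A(t,x) = (1/m') log E[exp(m'|x + z√(b-t)|)]` for a standard Gaussian `z`. -/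
noncomputable def A (b m' t x : ℝ) : ℝ :=
  (1 / m') * Real.log (∫ z, Real.exp (m' * |x + z * Real.sqrt (b - t)|) ∂(gaussianReal 0 1))

/-- The standard Gaussian density. -/
noncomputable def phi (y : ℝ) : ℝ := gaussianPDFReal 0 1 y

/-- The standard Gaussian distribution function. -/
noncomputable def Phi (y : ℝ) : ℝ := ∫ z in Set.Iic y, phi z

/-- The contribution `exp(m²τ/2 + mx) Φ(x/√τ + m√τ)` of the event `x + z√τ > 0` to
`E exp(m|x + z√τ|)`. The contribution of the complementary event is its value at `-x`. -/
noncomputable def half (m τ x : ℝ) : ℝ :=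
  Real.exp (m ^ 2 * τ / 2 + m * x) * Phi (x / √τ + m * √τ)

lemma phi_eq (y : ℝ) : phi y = (√(2 * Real.pi))⁻¹ * Real.exp (-y ^ 2 / 2) := by
  simp [phi, gaussianPDFReal]

lemma phi_neg (y : ℝ) : phi (-y) = phi y := by simp [phi_eq]

lemma continuous_phi : Continuous phi := by
  have h : phi = fun y => (√(2 * Real.pi))⁻¹ * Real.exp (-y ^ 2 / 2) := funext phi_eq
  rw [h]; fun_prop

lemma integrable_phi : Integrable phi := integrable_gaussianPDFReal 0 1

lemma hasDerivAt_Phi (y : ℝ) : HasDerivAt Phi (phi y) y := by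
  have h : Phi = fun y => Phi 0 + ∫ z in (0:ℝ)..y, phi z := by
    funext y
    rw [← intervalIntegral.integral_Iic_sub_Iic integrable_phi.integrableOn
      integrable_phi.integrableOn]
    simp [Phi]
  rw [h]
  exact (intervalIntegral.integral_hasDerivAt_right (continuous_phi.intervalIntegrable _ _)
    (continuous_phi.stronglyMeasurableAtFilter _ _) continuous_phi.continuousAt).const_add _

/-- Exponential tilting of the Gaussian density, by completing the square. -/
lemma exp_mul_phi (c z : ℝ) : Real.exp (c * z) * phi z = Real.exp (c ^ 2 / 2) * phi (z - c) := by
  rw [phi_eq, phi_eq, mul_left_comm, ← Real.exp_add, mul_left_comm (Real.exp (c ^ 2 / 2)),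
    ← Real.exp_add]
  congr 2; ring

/-- The tilting factor of `half` cancels against the density evaluated at the argument of `Phi`,
leaving a function that is even in `x`. -/
lemma tilt_mul_phi (m x : ℝ) {τ : ℝ} (hτ : 0 < τ) :
    Real.exp (m ^ 2 * τ / 2 + m * x) * phi (x / √τ + m * √τ) = phi (x / √τ) := by
  have hs : √τ ≠ 0 := (Real.sqrt_pos.2 hτ).ne'
  rw [phi_eq, phi_eq, mul_left_comm, ← Real.exp_add]
  congr 2
  nth_rewrite 1 [← Real.sq_sqrt hτ.le]
  field_simp
  ring

/-- The positive half of the Gaussian expectation: `E[exp(m(x+sz)); z > -x/s]` with `s = √τ`. -/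
lemma setIntegral_Ioi (m x : ℝ) {τ : ℝ} (hτ : 0 < τ) :
    ∫ z in Set.Ioi (-x / √τ), phi z * Real.exp (m * |x + z * √τ|) = half m τ x := by
  have hs : 0 < √τ := Real.sqrt_pos.2 hτ
  have h1 : ∀ z ∈ Set.Ioi (-x / √τ), phi z * Real.exp (m * |x + z * √τ|)
      = Real.exp (m ^ 2 * τ / 2 + m * x) * phi (-z + m * √τ) := by
    intro z hz
    have hz' : 0 < x + z * √τ := by
      have := (div_lt_iff₀ hs).1 hz
      linarith
    rw [abs_of_pos hz', show -z + m * √τ = -(z - m * √τ) by ring, phi_neg, Real.exp_add,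
      show m * (x + z * √τ) = m * x + m * √τ * z by ring, Real.exp_add,
      show m ^ 2 * τ / 2 = (m * √τ) ^ 2 / 2 by rw [mul_pow, Real.sq_sqrt hτ.le]]
    linear_combination Real.exp (m * x) * exp_mul_phi (m * √τ) z
  rw [setIntegral_congr_fun measurableSet_Ioi h1, integral_const_mul, half]
  congr 1
  have h2 := integral_comp_neg_Ioi (-x / √τ) (fun z => phi (z + m * √τ))
  rw [h2, Phi, show -(-x / √τ) = x / √τ by ring]
  have h3 := (measurePreserving_add_right volume (m * √τ)).setIntegral_preimage_emb
    (MeasurableEquiv.addRight (m * √τ)).measurableEmbedding phi (Set.Iic (x / √τ + m * √τ))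
  rw [← h3]
  simp

lemma phi_mul_exp_neg (m τ x z : ℝ) :
    phi (-z) * Real.exp (m * |x + -z * √τ|) = phi z * Real.exp (m * |-x + z * √τ|) := by
  rw [phi_neg, ← abs_neg]
  congr 4
  ring

/-- The negative half follows from the positive one by the reflection `(x, z) ↦ (-x, -z)`. -/
lemma setIntegral_Iic (m x : ℝ) {τ : ℝ} (hτ : 0 < τ) :
    ∫ z in Set.Iic (-x / √τ), phi z * Real.exp (m * |x + z * √τ|) = half m τ (-x) := by
  rw [← setIntegral_Ioi m (-x) hτ]
  have h := integral_comp_neg_Ioi (-(-x / √τ)) (fun z => phi z * Real.exp (m * |x + z * √τ|))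
  rw [neg_neg] at h
  rw [← h, ← neg_div]
  simp only [phi_mul_exp_neg]

lemma integrable_exp_abs (m : ℝ) : Integrable (fun z => Real.exp (m * |z|)) (gaussianReal 0 1) :=
  integrable_exp_mul_abs (integrable_exp_mul_gaussianReal m) (integrable_exp_mul_gaussianReal (-m))

lemma exp_abs_le {m x s z : ℝ} (hm : 0 ≤ m) (hs : 0 ≤ s) :
    Real.exp (m * |x + z * s|) ≤ Real.exp (m * |x|) * Real.exp (m * s * |z|) := by
  rw [← Real.exp_add, Real.exp_le_exp]
  have := abs_add_le x (z * s)
  rw [abs_mul, abs_of_nonneg hs] at this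
  nlinarith

lemma integrable_integrand {m s : ℝ} (hm : 0 ≤ m) (hs : 0 ≤ s) (x : ℝ) :
    Integrable (fun z => Real.exp (m * |x + z * s|)) (gaussianReal 0 1) := by
  refine ((integrable_exp_abs (m * s)).const_mul (Real.exp (m * |x|))).mono'
    (by fun_prop) (.of_forall fun z => ?_)
  rw [Real.norm_of_nonneg (Real.exp_pos _).le]
  exact exp_abs_le hm hs

lemma integral_eq_halves {m τ : ℝ} (hm : 0 ≤ m) (hτ : 0 < τ) (x : ℝ) :
    ∫ z, Real.exp (m * |x + z * √τ|) ∂(gaussianReal 0 1) = half m τ x + half m τ (-x) := by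
  have hi : Integrable (fun z => phi z * Real.exp (m * |x + z * √τ|)) := by
    have := integrable_integrand hm (Real.sqrt_nonneg τ) x
    rw [gaussianReal_of_var_ne_zero 0 one_ne_zero, gaussianPDF_def,
      integrable_withDensity_iff_integrable_smul₀' (by fun_prop) (by simp)] at this
    refine this.congr (.of_forall fun z => ?_)
    simp [phi, gaussianPDFReal_nonneg]
  rw [integral_gaussianReal_eq_integral_smul one_ne_zero]
  simp only [smul_eq_mul]
  rw [← setIntegral_Ioi m x hτ, ← setIntegral_Iic m x hτ, add_comm,
    ← Set.compl_Iic, integral_add_compl measurableSet_Iic hi]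
  rfl

lemma hasDerivAt_half_space (m x : ℝ) {τ : ℝ} (hτ : 0 < τ) :
    HasDerivAt (half m τ) (m * half m τ x + phi (x / √τ) / √τ) x := by
  have h1 : HasDerivAt (fun x => m ^ 2 * τ / 2 + m * x) m x := by
    simpa using ((hasDerivAt_id x).const_mul m).const_add (m ^ 2 * τ / 2)
  have h2 : HasDerivAt (fun x => x / √τ + m * √τ) (1 / √τ) x :=
    ((hasDerivAt_id x).div_const √τ).add_const (m * √τ)
  have h := h1.exp.mul ((hasDerivAt_Phi _).comp x h2)
  refine HasDerivAt.congr_deriv (f := half m τ) h ?_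
  rw [← tilt_mul_phi m x hτ]
  simp only [half, Function.comp]
  ring

lemma hasDerivAt_half_time (m x : ℝ) {τ : ℝ} (hτ : 0 < τ) :
    HasDerivAt (fun τ => half m τ x)
      (m ^ 2 / 2 * half m τ x + phi (x / √τ) * (-x / (2 * √τ ^ 3) + m / (2 * √τ))) τ := by
  have hs : √τ ≠ 0 := (Real.sqrt_pos.2 hτ).ne'
  have h1 : HasDerivAt (fun τ => m ^ 2 * τ / 2 + m * x) (m ^ 2 / 2) τ := by
    simpa using (((hasDerivAt_id τ).const_mul (m ^ 2)).div_const 2).add_const (m * x)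
  have hq : HasDerivAt (fun τ => √τ) (1 / (2 * √τ)) τ := Real.hasDerivAt_sqrt hτ.ne'
  have h2 : HasDerivAt (fun τ => x / √τ + m * √τ) (-x / (2 * √τ ^ 3) + m / (2 * √τ)) τ := by
    refine (((hasDerivAt_const τ x).div hq hs).add (hq.const_mul m)).congr_deriv ?_
    field_simp
    ring
  have h := h1.exp.mul ((hasDerivAt_Phi _).comp τ h2)
  refine HasDerivAt.congr_deriv (f := fun τ => half m τ x) h ?_
  rw [← tilt_mul_phi m x hτ]
  simp only [half, Function.comp]
  ring

theorem A_solves_parisi_pde (a b m' : ℝ) (ha : 0 ≤ a) (hab : a < b) (hm' : 0 < m') :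
    (∀ t ∈ Set.Ico a b, ∀ x : ℝ,
        DifferentiableAt ℝ (A b m' t) x ∧
        DifferentiableAt ℝ (deriv (A b m' t)) x ∧
        HasDerivAt (fun s => A b m' s x)
          (-(1 / 2) * (deriv (deriv (A b m' t)) x + m' * (deriv (A b m' t) x) ^ 2)) t)
    ∧ (∀ x : ℝ, Filter.Tendsto (fun t => A b m' t x)
        (nhdsWithin b (Set.Iio b)) (nhds |x|)) := by
  have hm : m' ≠ 0 := hm'.ne'
  constructor
  · intro t ht x
    have hτ : 0 < b - t := sub_pos.2 ht.2
    set τ := b - t with hτdef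
    have hs : √τ ≠ 0 := (Real.sqrt_pos.2 hτ).ne'
    have hA : ∀ s < b, ∀ y, A b m' s y
        = (1 / m') * Real.log (half m' (b - s) y + half m' (b - s) (-y)) := fun s hs y => by
      rw [A, integral_eq_halves hm'.le (sub_pos.2 hs)]
    have hAt : A b m' t = fun y => (1 / m') * Real.log (half m' τ y + half m' τ (-y)) :=
      funext (hA t ht.2)
    have hpos : ∀ y, 0 < half m' τ y + half m' τ (-y) := fun y => by
      rw [← integral_eq_halves hm'.le hτ]
      exact integral_exp_pos (integrable_integrand hm'.le (Real.sqrt_nonneg τ) y)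
    have hneg : ∀ y, HasDerivAt (fun y => half m' τ (-y))
        (-(m' * half m' τ (-y) + phi (y / √τ) / √τ)) y := fun y => by
      have h := (hasDerivAt_half_space m' (-y) hτ).comp y (hasDerivAt_neg y)
      rw [neg_div, phi_neg] at h
      simpa [Function.comp_def] using h
    have hu : ∀ y, HasDerivAt (fun y => half m' τ y + half m' τ (-y))
        (m' * (half m' τ y - half m' τ (-y))) y := fun y => by
      refine ((hasDerivAt_half_space m' y hτ).add (hneg y)).congr_deriv ?_
      ring
    have hA1 : ∀ y, HasDerivAt (A b m' t)
        ((half m' τ y - half m' τ (-y)) / (half m' τ y + half m' τ (-y))) y := fun y => by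
      rw [hAt]
      refine (((hu y).log (hpos y).ne').const_mul (1 / m')).congr_deriv ?_
      field_simp
    have hd : deriv (A b m' t) = fun y =>
        (half m' τ y - half m' τ (-y)) / (half m' τ y + half m' τ (-y)) :=
      funext fun y => (hA1 y).deriv
    have hA2 := (((hasDerivAt_half_space m' x hτ).sub (hneg x)).div (hu x)
      (hpos x).ne').congr_of_eventuallyEq (f₁ := deriv (A b m' t)) (.of_eq hd)
    refine ⟨(hA1 x).differentiableAt, hA2.differentiableAt, ?_⟩
    rw [hA2.deriv, (hA1 x).deriv]
    have hsub : HasDerivAt (fun s => b - s) (-1) t := by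
      simpa using (hasDerivAt_id t).const_sub b
    have hut : HasDerivAt (fun s => half m' (b - s) x + half m' (b - s) (-x))
        (-(m' ^ 2 / 2 * (half m' τ x + half m' τ (-x)) + m' * phi (x / √τ) / √τ)) t := by
      refine (((hasDerivAt_half_time m' x hτ).add (hasDerivAt_half_time m' (-x) hτ)).comp t
        hsub).congr_deriv ?_
      rw [neg_div √τ x, phi_neg]
      ring
    have hT := (hut.log (hpos x).ne').const_mul (1 / m')
    have heq : (fun s => A b m' s x) =ᶠ[nhds t]
        fun s => (1 / m') * Real.log (half m' (b - s) x + half m' (b - s) (-x)) := by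
      filter_upwards [Iio_mem_nhds ht.2] with s hs using hA s hs x
    refine HasDerivAt.congr_of_eventuallyEq ?_ heq
    refine hT.congr_deriv ?_
    have := (hpos x).ne'
    simp only [Pi.sub_apply]
    rw [← hτdef]
    field_simp
    ring
  · intro x
    have hE : Filter.Tendsto
        (fun t => ∫ z, Real.exp (m' * |x + z * √(b - t)|) ∂(gaussianReal 0 1))
        (nhdsWithin b (Set.Iio b)) (nhds (∫ _, Real.exp (m' * |x|) ∂(gaussianReal 0 1))) := by
      refine tendsto_integral_filter_of_dominated_convergence
        (fun z => Real.exp (m' * |x|) * Real.exp (m' * |z|))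
        (.of_forall fun t => by fun_prop) ?_
        ((integrable_exp_abs m').const_mul _) (.of_forall fun z => ?_)
      · filter_upwards [nhdsWithin_le_nhds (Ioi_mem_nhds (sub_one_lt b))] with t ht
        refine .of_forall fun z => ?_
        -- The bound is uniform in `t` because `b - 1 < t` keeps the scale at most `1`.
        have h1 : √(b - t) ≤ 1 := by
          rw [Real.sqrt_le_one]
          have := Set.mem_Ioi.1 ht
          linarith
        rw [Real.norm_of_nonneg (Real.exp_pos _).le]
        refine (exp_abs_le hm'.le (Real.sqrt_nonneg _)).trans ?_
        gcongr
        exact mul_le_of_le_one_right hm'.le h1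
      · have hc : Continuous fun t => Real.exp (m' * |x + z * √(b - t)|) := by fun_prop
        have := hc.tendsto b
        simp only [sub_self, Real.sqrt_zero, mul_zero, add_zero] at this
        exact this.mono_left nhdsWithin_le_nhds
    have hL := (hE.log (by simp)).const_mul (1 / m')
    simpa [A, hm] using hL
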